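/- Let Ω ⊂ ℍ be a bounded domain, θ ∈ [0,2π), u ∈ ℍ. The (θ,u)-hyperholomorphic Bergman space ${}^θ_u𝒜(Ω)$ is complete in the L² norm: if (fₙ) is a sequence in ${}^θ_u𝒜(Ω)$ which is Cauchy with respect to the norm $‖f‖ = (∫_Ω |f|²dμ)^{1/2}$, then there exists f ∈ ${}^θ_u𝒜(Ω)$ with ∫_Ω |fₙ − f|² dμ → 0. Equivalently, ${}^θ_u𝒜(Ω)$ is a closed subspace of L²(Ω,ℍ). -/

import Mathlib

open MeasureTheory

noncomputable section

/-- The real quaternions `ℍ`. -/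
abbrev H4 : Type := Quaternion ℝ

instance : MeasurableSpace H4 := borel _
instance : BorelSpace H4 := ⟨rfl⟩

/-- The quaternion unit `i`. -/
def qI : H4 := ⟨0, 1, 0, 0⟩
/-- The quaternion unit `j`. -/
def qJ : H4 := ⟨0, 0, 1, 0⟩
/-- `e^{iθ} = cos θ + (sin θ) i` as a quaternion. -/
def eIθ (θ : ℝ) : H4 := ⟨Real.cos θ, Real.sin θ, 0, 0⟩
/-- The basis direction `i e^{iθ} j`. -/
def e2 (θ : ℝ) : H4 := qI * eIθ θ * qJ
/-- The basis direction `e^{iθ} j`. -/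
def e3 (θ : ℝ) : H4 := eIθ θ * qJ

/-- Third θ-coordinate of a quaternion `z = x₀ + x₁ i + x₂ (i e^{iθ} j) + x₃ (e^{iθ} j)`. -/
def x2θ (θ : ℝ) (z : H4) : ℝ := -z.imJ * Real.sin θ + z.imK * Real.cos θ
/-- Fourth θ-coordinate of a quaternion. -/
def x3θ (θ : ℝ) (z : H4) : ℝ := z.imJ * Real.cos θ + z.imK * Real.sin θ

/-- The θ-inner product `⟨u,z⟩_θ`: the dot product of θ-coordinates. -/
def innerθ (θ : ℝ) (u z : H4) : ℝ :=
  u.re * z.re + u.imI * z.imI + x2θ θ u * x2θ θ z + x3θ θ u * x3θ θ z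

/-- Left θ-Cauchy–Riemann operator
`{}^θ𝒟 f = ∂f/∂x₀ + i ∂f/∂x₁ + (i e^{iθ} j) ∂f/∂x₂ + (e^{iθ} j) ∂f/∂x₃`. -/
def Dl (θ : ℝ) (f : H4 → H4) (z : H4) : H4 :=
  fderiv ℝ f z 1 + qI * fderiv ℝ f z qI + e2 θ * fderiv ℝ f z (e2 θ) +
    e3 θ * fderiv ℝ f z (e3 θ)

/-- Left (θ,u)-Cauchy–Riemann operator `{}^θ_u𝒟 f = {}^θ𝒟 f + u f`. -/
def Dlu (θ : ℝ) (u : H4) (f : H4 → H4) (z : H4) : H4 := Dl θ f z + u * f z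

/-- Right θ-Cauchy–Riemann operator. -/
def Dr (θ : ℝ) (f : H4 → H4) (z : H4) : H4 :=
  fderiv ℝ f z 1 + fderiv ℝ f z qI * qI + fderiv ℝ f z (e2 θ) * e2 θ +
    fderiv ℝ f z (e3 θ) * e3 θ

/-- Right (θ,u)-Cauchy–Riemann operator `{}^θ𝒟_{r,u} f = {}^θ𝒟_r f + f u`. -/
def Dru (θ : ℝ) (u : H4) (f : H4 → H4) (z : H4) : H4 := Dr θ f z + f z * u

/-- Embedding of ℂ into the quaternions, `ℂ ≅ ℝ + ℝi ⊂ ℍ`. -/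
def toH (a : ℂ) : H4 := ⟨a.re, a.im, 0, 0⟩

/-- First complex θ-component of a quaternion: `z₁ = x₀ + x₁ i`. -/
def c1 (z : H4) : ℂ := ⟨z.re, z.imI⟩
/-- Second complex θ-component of a quaternion: `z₂ = x₂ + x₃ i`. -/
def c2 (θ : ℝ) (z : H4) : ℂ := ⟨x2θ θ z, x3θ θ z⟩

/-- Wirtinger operator `∂/∂z̄₁ = ∂/∂x₀ + i ∂/∂x₁` on ℂ-valued functions. -/
def db1 (f : H4 → ℂ) (z : H4) : ℂ := fderiv ℝ f z 1 + Complex.I * fderiv ℝ f z qI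
/-- Wirtinger operator `∂/∂z̄₂ = ∂/∂x₂ + i ∂/∂x₃` on ℂ-valued functions. -/
def db2 (θ : ℝ) (f : H4 → ℂ) (z : H4) : ℂ :=
  fderiv ℝ f z (e2 θ) + Complex.I * fderiv ℝ f z (e3 θ)
/-- Wirtinger operator `∂/∂z₂ = ∂/∂x₂ − i ∂/∂x₃` on ℂ-valued functions. -/
def dz2 (θ : ℝ) (f : H4 → ℂ) (z : H4) : ℂ :=
  fderiv ℝ f z (e2 θ) - Complex.I * fderiv ℝ f z (e3 θ)

/-- `e^{iθ}` as a complex number. -/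
def cexpI (θ : ℝ) : ℂ := ⟨Real.cos θ, Real.sin θ⟩

/-- The (θ,u)-hyperholomorphic Bergman space `{}^θ_u𝒜(Ω)`: C¹ null solutions of `{}^θ_u𝒟`
with `∫_Ω |f|² dμ < ∞`. -/
def memA (θ : ℝ) (u : H4) (Ω : Set H4) (f : H4 → H4) : Prop :=
  ContDiffOn ℝ 1 f Ω ∧ (∀ z ∈ Ω, Dlu θ u f z = 0) ∧
    IntegrableOn (fun z => ‖f z‖ ^ 2) Ω volume

/-!
Let `D = ∑ σ(bᵢ) ∂ᵢ` have a Clifford symbol, `τ(v) σ(v) = ‖v‖²`; in `ℍ`, `σ` is left multiplication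
and `τ` left multiplication by the conjugate. If `D g = 0`, then the radial derivative of `g`,
weighted by a radial function of compact support, is the divergence of a compactly supported field
built from the tangential action of bivectors on `g`, so its integral vanishes. Hence weighted means
of `g` over balls do not depend on the radius: `g` has the mean value property. Since
`D (e^{⟨x, w⟩} f) = e^{⟨x, w⟩} (D f + σ(w) f)`, a solution `f` of `D f + σ(w) f = 0` is, locally, its
own convolution with a fixed compactly supported `C¹` kernel. Convolution with such a kernel turns
`L¹` convergence into pointwise convergence of the functions and of their first derivatives, so an
`Lᵖ` limit of solutions agrees almost everywhere with a solution, and the completeness of the space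
of solutions follows from that of `Lᵖ`.
-/

open Filter Metric Set Topology
open scoped Convolution InnerProductSpace

section CompactSupport

variable {V W : Type*} [NormedAddCommGroup V] [NormedSpace ℝ V]
  [NormedAddCommGroup W] [NormedSpace ℝ W]

lemma fderiv_comp_add_smul (g : V → W) (z y : V) (t : ℝ) :
    fderiv ℝ (fun y ↦ g (z + t • y)) y = t • fderiv ℝ g (z + t • y) := by
  rw [fderiv_comp_smul (f := fun y ↦ g (z + y)), fderiv_comp_add_left]

lemma integrable_fderiv_apply [MeasurableSpace V] [OpensMeasurableSpace V] {μ : Measure V}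
    [IsFiniteMeasureOnCompacts μ] {f : V → W} (hf : ContDiff ℝ 1 f) (hfc : HasCompactSupport f)
    (v : V) : Integrable (fun y ↦ fderiv ℝ f y v) μ :=
  ((hf.continuous_fderiv one_ne_zero).clm_apply continuous_const).integrable_of_hasCompactSupport
    (hfc.fderiv_apply (𝕜 := ℝ) v)

variable [FiniteDimensional ℝ V]

lemma exists_contDiff_hasCompactSupport_eventuallyEq {n : ℕ∞} {f : V → W} {z : V} {r R : ℝ}
    (hf : ContDiffOn ℝ n f (ball z R)) (hr : 0 < r) (hrR : r < R) :
    ∃ g : V → W, ContDiff ℝ n g ∧ HasCompactSupport g ∧ ∀ x ∈ ball z r, g =ᶠ[𝓝 x] f := by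
  let χ : ContDiffBump z := ⟨r, (r + R) / 2, hr, by linarith⟩
  have hχR : tsupport χ ⊆ ball z R := by
    rw [χ.tsupport_eq]
    exact closedBall_subset_ball (by change (r + R) / 2 < R; linarith)
  refine ⟨fun x ↦ χ x • f x, contDiff_iff_contDiffAt.2 fun x ↦ ?_, χ.hasCompactSupport.smul_right,
    fun x hx ↦ ?_⟩
  · by_cases hx : x ∈ tsupport χ
    · exact χ.contDiffAt.smul (hf.contDiffAt (isOpen_ball.mem_nhds (hχR hx)))
    · refine (contDiffAt_const (c := (0 : W))).congr_of_eventuallyEq ?_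
      filter_upwards [notMem_tsupport_iff_eventuallyEq.1 hx] with y hy
      simp [hy]
  · filter_upwards [isOpen_ball.mem_nhds hx] with y hy
    simp [χ.one_of_mem_closedBall (ball_subset_closedBall hy)]

variable [MeasurableSpace V] [BorelSpace V] {μ : Measure V} [μ.IsAddHaarMeasure]

lemma integral_fderiv_apply_eq_zero {f : V → W} (hf : ContDiff ℝ 1 f) (hfc : HasCompactSupport f)
    (v : V) : ∫ y, fderiv ℝ f y v ∂μ = 0 := by
  simpa using integral_smul_fderiv_eq_neg_fderiv_smul_of_integrable (𝕜 := ℝ) (μ := μ)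
    (f := fun _ ↦ (1 : ℝ)) (g := f) (v := v) (by simp)
    (by simpa using integrable_fderiv_apply hf hfc v)
    (by simpa using hf.continuous.integrable_of_hasCompactSupport hfc)
    (by simp) (fun x _ ↦ hf.differentiable one_ne_zero x)

lemma hasDerivAt_integral_smul_comp_add_smul {k : V → ℝ} (hk : Continuous k)
    (hkc : HasCompactSupport k) {g : V → W} (hg : ContDiff ℝ 1 g) (hgc : HasCompactSupport g)
    (z : V) (t : ℝ) :
    HasDerivAt (fun t : ℝ ↦ ∫ y, k y • g (z + t • y) ∂μ)
      (∫ y, k y • fderiv ℝ g (z + t • y) y ∂μ) t := by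
  have hg' : Continuous (fderiv ℝ g) := hg.continuous_fderiv one_ne_zero
  have hcont (s : ℝ) : Continuous fun y ↦ k y • g (z + s • y) :=
    hk.smul (hg.continuous.comp (by fun_prop))
  have hcont' : Continuous fun y ↦ k y • fderiv ℝ g (z + t • y) y :=
    hk.smul ((hg'.comp (by fun_prop)).clm_apply continuous_id)
  obtain ⟨C, hC⟩ := hg'.bounded_above_of_compact_support (hgc.fderiv (𝕜 := ℝ))
  have hbound (y : V) (s : ℝ) : ‖k y • fderiv ℝ g (z + s • y) y‖ ≤ ‖k y‖ * (C * ‖y‖) := by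
    rw [norm_smul]
    gcongr
    exact ContinuousLinearMap.le_of_opNorm_le _ (hC _) _
  have hderiv (y : V) (s : ℝ) :
      HasDerivAt (fun t : ℝ ↦ k y • g (z + t • y)) (k y • fderiv ℝ g (z + s • y) y) s := by
    have hline : HasDerivAt (fun t : ℝ ↦ z + t • y) y s := by
      simpa using ((hasDerivAt_id s).smul_const y).const_add z
    exact ((hg.differentiable one_ne_zero _).hasFDerivAt.comp_hasDerivAt s hline).const_smul _
  exact (hasDerivAt_integral_of_dominated_loc_of_deriv_le univ_mem
    (Eventually.of_forall fun s ↦ (hcont s).aestronglyMeasurable)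
    ((hcont t).integrable_of_hasCompactSupport hkc.smul_right)
    hcont'.aestronglyMeasurable
    (Eventually.of_forall fun y s _ ↦ hbound y s)
    (Continuous.integrable_of_hasCompactSupport (by fun_prop) hkc.norm.mul_right)
    (Eventually.of_forall fun y s _ ↦ hderiv y s)).2

end CompactSupport

section ConvolutionLimit

variable {ι V E E' F : Type*} [NormedAddCommGroup V] [NormedSpace ℝ V] [FiniteDimensional ℝ V]
  [MeasurableSpace V] [BorelSpace V] {μ : Measure V} [μ.IsAddHaarMeasure]
  [NormedAddCommGroup E] [NormedSpace ℝ E] [NormedAddCommGroup E'] [NormedSpace ℝ E']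
  [NormedAddCommGroup F] [NormedSpace ℝ F]
  {l : Filter ι} {h : ι → V → E'} {H : V → E'}

lemma tendsto_convolution_of_eLpNorm_one (B : E →L[ℝ] E' →L[ℝ] F) {k : V → E}
    (hk : Continuous k) (hkc : HasCompactSupport k) (hh : ∀ n, Integrable (h n) μ)
    (hH : Integrable H μ) (hlim : Tendsto (fun n ↦ eLpNorm (h n - H) 1 μ) l (𝓝 0)) (z : V) :
    Tendsto (fun n ↦ (k ⋆[B, μ] h n) z) l (𝓝 ((k ⋆[B, μ] H) z)) := by
  obtain ⟨C, hC⟩ := hk.bounded_above_of_compact_support hkc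
  have hC0 : 0 ≤ C := (norm_nonneg _).trans (hC 0)
  have hint (g : V → E') (hg : Integrable g μ) : Integrable (fun t ↦ B (k t) (g (z - t))) μ :=
    hkc.convolutionExists_left B hk hg.locallyIntegrable z
  refine tendsto_integral_of_L1 _ (hint H hH).aestronglyMeasurable
    (Eventually.of_forall fun n ↦ hint _ (hh n)) ?_
  have hbound (n : ι) : ∫⁻ t, ‖B (k t) (h n (z - t)) - B (k t) (H (z - t))‖ₑ ∂μ ≤
      ENNReal.ofReal (‖B‖ * C) * eLpNorm (h n - H) 1 μ := by
    rw [eLpNorm_one_eq_lintegral_enorm, ← lintegral_sub_left_eq_self (fun x ↦ ‖(h n - H) x‖ₑ) z,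
      ← lintegral_const_mul' _ _ ENNReal.ofReal_ne_top]
    refine lintegral_mono fun t ↦ ?_
    rw [← map_sub, ← ofReal_norm, ← ofReal_norm, ← ENNReal.ofReal_mul (by positivity)]
    exact ENNReal.ofReal_le_ofReal ((B.le_opNorm₂ _ _).trans (by gcongr; exacts [hC t, le_rfl]))
  refine tendsto_of_tendsto_of_tendsto_of_le_of_le tendsto_const_nhds ?_ (fun _ ↦ zero_le) hbound
  simpa using ENNReal.Tendsto.const_mul hlim (Or.inr ENNReal.ofReal_ne_top)

lemma tendsto_fderiv_convolution_of_eLpNorm_one (B : E →L[ℝ] E' →L[ℝ] F)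
    {k : V → E} (hk : ContDiff ℝ 1 k) (hkc : HasCompactSupport k) (hh : ∀ n, Integrable (h n) μ)
    (hH : Integrable H μ) (hlim : Tendsto (fun n ↦ eLpNorm (h n - H) 1 μ) l (𝓝 0)) (z : V) :
    Tendsto (fun n ↦ fderiv ℝ (k ⋆[B, μ] h n) z) l (𝓝 (fderiv ℝ (k ⋆[B, μ] H) z)) := by
  have hfderiv (g : V → E') (hg : Integrable g μ) :
      fderiv ℝ (k ⋆[B, μ] g) z = (fderiv ℝ k ⋆[B.precompL V, μ] g) z :=
    (hkc.hasFDerivAt_convolution_left B hk hg.locallyIntegrable z).fderiv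
  simp only [hfderiv H hH, fun n ↦ hfderiv (h n) (hh n)]
  exact tendsto_convolution_of_eLpNorm_one _ (hk.continuous_fderiv one_ne_zero)
    (hkc.fderiv (𝕜 := ℝ)) hh hH hlim z

end ConvolutionLimit

section Lp

variable {α ι W : Type*} [MeasurableSpace α] {μ : Measure α} [NormedAddCommGroup W] {p : ENNReal}

lemma tendsto_eLpNorm_one_of_tendsto_eLpNorm [IsFiniteMeasure μ] (hp : 1 ≤ p) {l : Filter ι}
    {f : ι → α → W} (hf : ∀ n, AEStronglyMeasurable (f n) μ)
    (hlim : Tendsto (fun n ↦ eLpNorm (f n) p μ) l (𝓝 0)) :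
    Tendsto (fun n ↦ eLpNorm (f n) 1 μ) l (𝓝 0) := by
  have hfin : μ univ ^ (1 / (1 : ENNReal).toReal - 1 / p.toReal) ≠ ⊤ := by
    refine ENNReal.rpow_ne_top_of_nonneg (sub_nonneg.2 ?_) (measure_ne_top μ univ)
    rcases eq_or_ne p ⊤ with rfl | hp'
    · simp
    · exact one_div_le_one_div_of_le (by simp) (ENNReal.toReal_mono hp' hp)
  refine tendsto_of_tendsto_of_tendsto_of_le_of_le tendsto_const_nhds ?_ (fun _ ↦ zero_le)
    fun n ↦ eLpNorm_le_eLpNorm_mul_rpow_measure_univ hp (hf n)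
  simpa using ENNReal.Tendsto.mul_const hlim (Or.inr hfin)

lemma exists_memLp_tendsto_of_cauchy [CompleteSpace W] [Fact (1 ≤ p)] {f : ℕ → α → W}
    (hf : ∀ n, MemLp (f n) p μ)
    (hcauchy : Tendsto (fun n : ℕ × ℕ ↦ eLpNorm (f n.1 - f n.2) p μ) atTop (𝓝 0)) :
    ∃ g, MemLp g p μ ∧ Tendsto (fun n ↦ eLpNorm (f n - g) p μ) atTop (𝓝 0) := by
  have hcauchySeq : CauchySeq fun n ↦ (hf n).toLp (f n) := by
    refine (Lp.cauchySeq_Lp_iff_cauchySeq_eLpNorm _).2 (hcauchy.congr fun n ↦ ?_)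
    exact eLpNorm_congr_ae ((hf n.1).coeFn_toLp.sub (hf n.2).coeFn_toLp).symm
  obtain ⟨g, hg⟩ := cauchySeq_tendsto_of_complete hcauchySeq
  exact ⟨g, Lp.memLp g, (Lp.tendsto_Lp_iff_tendsto_eLpNorm'' f hf g (Lp.memLp g)).1 (by simpa)⟩

lemma tendsto_eLpNorm_two_iff_tendsto_integral_sq {l : Filter ι} {f : ι → α → W}
    (hf : ∀ n, MemLp (f n) 2 μ) :
    Tendsto (fun n ↦ eLpNorm (f n) 2 μ) l (𝓝 0) ↔
      Tendsto (fun n ↦ √(∫ x, ‖f n x‖ ^ 2 ∂μ)) l (𝓝 0) := by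
  have heq (n : ι) : (eLpNorm (f n) 2 μ).toReal = √(∫ x, ‖f n x‖ ^ 2 ∂μ) := by
    rw [(hf n).eLpNorm_eq_integral_rpow_norm (by norm_num) (by norm_num), Real.sqrt_eq_rpow,
      ENNReal.toReal_ofReal (by positivity)]
    norm_num
  simp only [← heq, ← ENNReal.toReal_zero,
    ENNReal.tendsto_toReal_iff (fun n ↦ (hf n).eLpNorm_ne_top) ENNReal.zero_ne_top]

end Lp

section Dirac

variable {ι V E F : Type*} [Fintype ι] [NormedAddCommGroup V] [InnerProductSpace ℝ V]
  [NormedAddCommGroup E] [NormedSpace ℝ E] [NormedAddCommGroup F] [NormedSpace ℝ F]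
  {σ : V →L[ℝ] E →L[ℝ] F} {τ : V →L[ℝ] F →L[ℝ] E} {b : OrthonormalBasis ι ℝ V}

/-- The first-order constant-coefficient operator `∑ i, σ (b i) ∂_{b i}` with symbol `σ`. For `σ`
the left multiplication of `ℍ` and `b` an orthonormal basis of `ℍ` this is a left
Cauchy–Riemann operator. -/
def diracOp (σ : V →L[ℝ] E →L[ℝ] F) (b : OrthonormalBasis ι ℝ V) (f : V → E) (x : V) : F :=
  ∑ i, σ (b i) (fderiv ℝ f x (b i))

/-- Clifford symbols: `τ` inverts `σ` up to the squared norm, so that the operator with symbol `τ`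
composed with the one with symbol `σ` is the Laplacian. In `ℍ`, `τ v` is multiplication by the
conjugate of `v`. -/
def IsCliffordPair (σ : V →L[ℝ] E →L[ℝ] F) (τ : V →L[ℝ] F →L[ℝ] E) : Prop :=
  ∀ v x, τ v (σ v x) = ‖v‖ ^ 2 • x

/-- The Clifford action of the bivector `e ∧ y` (up to sign), which is alternating in `e` and `y`
when `σ` and `τ` form a Clifford pair. -/
def bivectorAction (σ : V →L[ℝ] E →L[ℝ] F) (τ : V →L[ℝ] F →L[ℝ] E) (e y : V) (x : E) : E :=
  ⟪e, y⟫_ℝ • x - τ y (σ e x)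

/-- The solutions on `Ω` of `(∑ i, σ (b i) ∂_{b i} + σ w) f = 0` of class `C¹`. -/
def IsDiracNull (σ : V →L[ℝ] E →L[ℝ] F) (b : OrthonormalBasis ι ℝ V) (w : V) (Ω : Set V)
    (f : V → E) : Prop :=
  ContDiffOn ℝ 1 f Ω ∧ ∀ z ∈ Ω, diracOp σ b f z + σ w (f z) = 0

lemma diracOp_congr {f g : V → E} {x : V} (h : f =ᶠ[𝓝 x] g) :
    diracOp σ b f x = diracOp σ b g x := by
  simp only [diracOp, h.fderiv_eq]

lemma diracOp_comp_add_smul (g : V → E) (z y : V) (t : ℝ) :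
    diracOp σ b (fun y ↦ g (z + t • y)) y = t • diracOp σ b g (z + t • y) := by
  simp [diracOp, fderiv_comp_add_smul, Finset.smul_sum]

lemma diracOp_exp_inner_smul {f : V → E} {z : V} (hf : DifferentiableAt ℝ f z) (w : V) :
    diracOp σ b (fun x ↦ Real.exp ⟪x, w⟫_ℝ • f x) z =
      Real.exp ⟪z, w⟫_ℝ • (diracOp σ b f z + σ w (f z)) := by
  have hexp : HasFDerivAt (fun x ↦ Real.exp ⟪x, w⟫_ℝ)
      (Real.exp ⟪z, w⟫_ℝ • innerSL ℝ w) z := by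
    simpa only [innerSL_apply_apply, real_inner_comm w] using (innerSL ℝ w).hasFDerivAt.exp
  have hfderiv (v : V) : fderiv ℝ (fun x ↦ Real.exp ⟪x, w⟫_ℝ • f x) z v =
      Real.exp ⟪z, w⟫_ℝ • (fderiv ℝ f z v + ⟪v, w⟫_ℝ • f z) := by
    rw [(hexp.fun_smul hf.hasFDerivAt).fderiv]
    simp [smul_smul, real_inner_comm w]
  have hw : σ w (f z) = ∑ i, ⟪b i, w⟫_ℝ • σ (b i) (f z) := by
    conv_lhs => rw [← b.sum_repr' w]
    simp
  simp only [diracOp, hfderiv, hw, map_smul, map_add, ← Finset.smul_sum, Finset.sum_add_distrib]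

lemma bivectorAction_self (hστ : IsCliffordPair σ τ) (y : V) (x : E) :
    bivectorAction σ τ y y x = 0 := by
  rw [bivectorAction, hστ, real_inner_self_eq_norm_sq, sub_self]

lemma sum_bivectorAction_apply (y : V) (L : V →L[ℝ] E) :
    ∑ i, bivectorAction σ τ (b i) y (L (b i)) = L y - τ y (∑ i, σ (b i) (L (b i))) := by
  have hLy : L y = ∑ i, ⟪b i, y⟫_ℝ • L (b i) := by
    conv_lhs => rw [← b.sum_repr' y]
    simp
  simp only [bivectorAction, Finset.sum_sub_distrib, hLy, map_sum]

lemma sum_inner_smul_bivectorAction (hστ : IsCliffordPair σ τ) (y : V) (x : E) :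
    ∑ i, ⟪b i, y⟫_ℝ • bivectorAction σ τ (b i) y x = 0 := by
  calc ∑ i, ⟪b i, y⟫_ℝ • bivectorAction σ τ (b i) y x
      = bivectorAction σ τ (∑ i, ⟪b i, y⟫_ℝ • b i) y x := by
        simp [bivectorAction, smul_sub, smul_smul, sum_inner, real_inner_smul_left,
          Finset.sum_smul]
    _ = 0 := by rw [b.sum_repr', bivectorAction_self hστ]

lemma contDiff_bivectorAction {G : V → E} (hG : ContDiff ℝ 1 G) (e : V) :
    ContDiff ℝ 1 fun y ↦ bivectorAction σ τ e y (G y) :=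
  ((innerSL ℝ e).contDiff.smul hG).sub (τ.contDiff.clm_apply ((σ e).contDiff.comp hG))

lemma fderiv_bivectorAction {G : V → E} {y : V} (hG : DifferentiableAt ℝ G y) (e v : V) :
    fderiv ℝ (fun y ↦ bivectorAction σ τ e y (G y)) y v =
      bivectorAction σ τ e v (G y) + bivectorAction σ τ e y (fderiv ℝ G y v) := by
  have h : HasFDerivAt (fun y ↦ bivectorAction σ τ e y (G y)) _ y :=
    ((innerSL ℝ e).hasFDerivAt.fun_smul hG.hasFDerivAt).fun_sub
      (τ.hasFDerivAt.clm_apply ((σ e).hasFDerivAt.comp y hG.hasFDerivAt))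
  rw [h.fderiv]
  simp [bivectorAction]
  abel

section Radial

variable {ρ : ℝ → ℝ}

lemma hasFDerivAt_comp_norm_sq (hρ : Differentiable ℝ ρ) (y : V) :
    HasFDerivAt (fun y ↦ ρ (‖y‖ ^ 2)) ((2 * deriv ρ (‖y‖ ^ 2)) • innerSL ℝ y) y := by
  have h : HasFDerivAt (fun y ↦ ρ (‖y‖ ^ 2)) (deriv ρ (‖y‖ ^ 2) • (2 • innerSL ℝ y)) y :=
    (hρ (‖y‖ ^ 2)).hasDerivAt.comp_hasFDerivAt y (hasStrictFDerivAt_norm_sq y).hasFDerivAt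
  rwa [← ofNat_smul_eq_nsmul ℝ, smul_smul, mul_comm] at h

lemma contDiff_comp_norm_sq (hρ : ContDiff ℝ 1 ρ) : ContDiff ℝ 1 fun y : V ↦ ρ (‖y‖ ^ 2) :=
  hρ.comp (contDiff_norm_sq ℝ)

/-- No term in `ρ'` survives, since the fields `bivectorAction σ τ (b i)` are tangential to spheres:
this makes the radial derivative of a null solution a divergence for every radial weight. -/
lemma sum_fderiv_radial_smul_bivectorAction (hστ : IsCliffordPair σ τ) (hρ : Differentiable ℝ ρ)
    {G : V → E} (hG : ContDiff ℝ 1 G) (y : V) :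
    ∑ i, fderiv ℝ (fun y ↦ ρ (‖y‖ ^ 2) • bivectorAction σ τ (b i) y (G y)) y (b i) =
      ρ (‖y‖ ^ 2) • (fderiv ℝ G y y - τ y (diracOp σ b G y)) := by
  have hdiff (e : V) : DifferentiableAt ℝ (fun y ↦ bivectorAction σ τ e y (G y)) y :=
    (contDiff_bivectorAction hG e).differentiable one_ne_zero y
  have hterm (i : ι) :
      fderiv ℝ (fun y ↦ ρ (‖y‖ ^ 2) • bivectorAction σ τ (b i) y (G y)) y (b i) =
        ρ (‖y‖ ^ 2) • bivectorAction σ τ (b i) y (fderiv ℝ G y (b i)) +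
          (2 * deriv ρ (‖y‖ ^ 2)) • ⟪b i, y⟫_ℝ • bivectorAction σ τ (b i) y (G y) := by
    rw [((hasFDerivAt_comp_norm_sq hρ y).fun_smul (hdiff (b i)).hasFDerivAt).fderiv]
    simp [fderiv_bivectorAction (hG.differentiable one_ne_zero y), bivectorAction_self hστ,
      real_inner_comm, smul_smul]
  simp only [hterm, Finset.sum_add_distrib, ← Finset.smul_sum, sum_bivectorAction_apply,
    sum_inner_smul_bivectorAction hστ, smul_zero, add_zero, diracOp]

variable {r : ℝ} [FiniteDimensional ℝ V]

lemma hasCompactSupport_comp_norm_sq (hρr : ∀ y : V, r ≤ ‖y‖ → ρ (‖y‖ ^ 2) = 0) :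
    HasCompactSupport fun y : V ↦ ρ (‖y‖ ^ 2) :=
  HasCompactSupport.intro (isCompact_closedBall 0 r) fun y hy ↦
    hρr y (by simpa using (not_le.1 (mt mem_closedBall_zero_iff.2 hy)).le)

variable [MeasurableSpace V] [BorelSpace V]

lemma integral_radial_smul_fderiv_self_eq_zero (hστ : IsCliffordPair σ τ) (hρ : ContDiff ℝ 1 ρ)
    (hρr : ∀ y : V, r ≤ ‖y‖ → ρ (‖y‖ ^ 2) = 0) {g : V → E} (hg : ContDiff ℝ 1 g)
    (hgD : ∀ y, ‖y‖ < r → diracOp σ b g y = 0) :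
    ∫ y, ρ (‖y‖ ^ 2) • fderiv ℝ g y y = 0 := by
  let T (i : ι) (y : V) : E := ρ (‖y‖ ^ 2) • bivectorAction σ τ (b i) y (g y)
  have hT (i : ι) : ContDiff ℝ 1 (T i) :=
    (contDiff_comp_norm_sq hρ).smul (contDiff_bivectorAction hg _)
  have hTc (i : ι) : HasCompactSupport (T i) := (hasCompactSupport_comp_norm_sq hρr).smul_right
  have hdiv (y : V) : ρ (‖y‖ ^ 2) • fderiv ℝ g y y = ∑ i, fderiv ℝ (T i) y (b i) := by
    rw [sum_fderiv_radial_smul_bivectorAction hστ (hρ.differentiable one_ne_zero) hg]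
    rcases lt_or_ge ‖y‖ r with hy | hy
    · rw [hgD y hy, map_zero, sub_zero]
    · rw [hρr y hy, zero_smul, zero_smul]
  simp only [hdiv]
  rw [integral_finsetSum _ fun i _ ↦ integrable_fderiv_apply (hT i) (hTc i) _]
  exact Finset.sum_eq_zero fun i _ ↦ integral_fderiv_apply_eq_zero (hT i) (hTc i) _

lemma integral_radial_smul_fderiv_dilation_eq_zero (hστ : IsCliffordPair σ τ)
    (hρ : ContDiff ℝ 1 ρ) (hρr : ∀ y : V, r ≤ ‖y‖ → ρ (‖y‖ ^ 2) = 0) (hr : 0 < r) {g : V → E}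
    (hg : ContDiff ℝ 1 g) {z : V} (hgD : ∀ x ∈ ball z r, diracOp σ b g x = 0) {t : ℝ}
    (ht : t ∈ Icc (0 : ℝ) 1) :
    ∫ y, ρ (‖y‖ ^ 2) • fderiv ℝ g (z + t • y) y = 0 := by
  rcases eq_or_ne t 0 with rfl | ht0
  · have hlin := integral_radial_smul_fderiv_self_eq_zero (b := b) (g := fderiv ℝ g z) hστ hρ hρr
      (fderiv ℝ g z).contDiff fun y _ ↦ by
        simpa [diracOp] using hgD z (mem_ball_self hr)
    simpa using hlin
  · have hnull (y : V) (hy : ‖y‖ < r) : diracOp σ b (fun y ↦ g (z + t • y)) y = 0 := by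
      rw [diracOp_comp_add_smul, hgD, smul_zero]
      rw [mem_ball_iff_norm, add_sub_cancel_left, norm_smul, Real.norm_of_nonneg ht.1]
      exact (mul_le_of_le_one_left (norm_nonneg y) ht.2).trans_lt hy
    have hsmooth : ContDiff ℝ 1 fun y ↦ g (z + t • y) := hg.comp (by fun_prop)
    have hdil := integral_radial_smul_fderiv_self_eq_zero hστ hρ hρr hsmooth hnull
    simp only [fderiv_comp_add_smul, _root_.smul_apply, smul_comm _ t] at hdil
    rw [integral_smul] at hdil
    exact (smul_eq_zero.1 hdil).resolve_left ht0

lemma integral_radial_smul_eq_of_hasCompactSupport [CompleteSpace E] (hστ : IsCliffordPair σ τ)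
    (hρ : ContDiff ℝ 1 ρ) (hρr : ∀ y : V, r ≤ ‖y‖ → ρ (‖y‖ ^ 2) = 0) (hr : 0 < r) {g : V → E}
    (hg : ContDiff ℝ 1 g) (hgc : HasCompactSupport g) {z : V}
    (hgD : ∀ x ∈ ball z r, diracOp σ b g x = 0) :
    ∫ y, ρ (‖y‖ ^ 2) • g (z + y) = (∫ y : V, ρ (‖y‖ ^ 2)) • g z := by
  have hderiv (t : ℝ) := hasDerivAt_integral_smul_comp_add_smul (μ := volume)
    (contDiff_comp_norm_sq (V := V) hρ).continuous (hasCompactSupport_comp_norm_sq hρr) hg hgc z t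
  have hconst := constant_of_has_deriv_right_zero (a := 0) (b := 1)
    (fun t _ ↦ (hderiv t).continuousAt.continuousWithinAt)
    (fun t ht ↦ by
      simpa only [integral_radial_smul_fderiv_dilation_eq_zero hστ hρ hρr hr hg hgD
        (Ico_subset_Icc_self ht)] using (hderiv t).hasDerivWithinAt)
    1 (right_mem_Icc.2 zero_le_one)
  simpa [integral_smul_const] using hconst

lemma integral_radial_smul_eq_of_diracOp_eq_zero [CompleteSpace E] (hστ : IsCliffordPair σ τ)
    (hρ : ContDiff ℝ 1 ρ) (hρr : ∀ y : V, r ≤ ‖y‖ → ρ (‖y‖ ^ 2) = 0) (hr : 0 < r) {R : ℝ}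
    (hrR : r < R) {z : V} {f : V → E} (hf : ContDiffOn ℝ 1 f (ball z R))
    (hfD : ∀ x ∈ ball z R, diracOp σ b f x = 0) :
    ∫ y, ρ (‖y‖ ^ 2) • f (z + y) = (∫ y : V, ρ (‖y‖ ^ 2)) • f z := by
  obtain ⟨g, hg, hgc, hgf⟩ := exists_contDiff_hasCompactSupport_eventuallyEq hf hr hrR
  have hgD (x : V) (hx : x ∈ ball z r) : diracOp σ b g x = 0 := by
    rw [diracOp_congr (hgf x hx), hfD x (ball_subset_ball hrR.le hx)]
  rw [← (hgf z (mem_ball_self hr)).eq_of_nhds,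
    ← integral_radial_smul_eq_of_hasCompactSupport hστ hρ hρr hr hg hgc hgD]
  refine integral_congr_ae (Eventually.of_forall fun y ↦ ?_)
  rcases lt_or_ge ‖y‖ r with hy | hy
  · simp only [(hgf (z + y) (by simpa using hy)).eq_of_nhds]
  · simp only [hρr y hy, zero_smul]

end Radial

section ReproducingKernel

variable {r : ℝ}

/-- A smooth cutoff in the variable `s = ‖y‖ ^ 2`, positive for `s < r ^ 2` and zero for
`r ^ 2 ≤ s`. -/
def radialProfile (r s : ℝ) : ℝ := Real.smoothTransition (1 - s / r ^ 2)

lemma contDiff_radialProfile (r : ℝ) {n : ℕ∞} : ContDiff ℝ n (radialProfile r) :=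
  Real.smoothTransition.contDiff.comp (contDiff_const.sub (contDiff_id.div_const _))

lemma radialProfile_sq_eq_zero (hr : 0 < r) {s : ℝ} (hs : r ≤ s) :
    radialProfile r (s ^ 2) = 0 := by
  apply Real.smoothTransition.zero_of_nonpos
  rw [sub_nonpos, one_le_div (by positivity)]
  gcongr

variable [FiniteDimensional ℝ V] [MeasurableSpace V] [BorelSpace V]

lemma integral_radialProfile_norm_sq_pos (hr : 0 < r) :
    0 < ∫ y : V, radialProfile r (‖y‖ ^ 2) :=
  (contDiff_comp_norm_sq (contDiff_radialProfile r)).continuous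
    |>.integral_pos_of_hasCompactSupport_nonneg_nonzero
      (hasCompactSupport_comp_norm_sq fun _ ↦ radialProfile_sq_eq_zero hr)
      (fun _ ↦ Real.smoothTransition.nonneg _) (x := 0) (by simp [radialProfile])

/-- A `C¹` kernel supported in the closed ball of radius `r` which reproduces by convolution the
solutions of `(D + σ w) f = 0`, `D` being a Dirac operator with a Clifford symbol `σ`. The
exponential factor turns these solutions into null solutions of `D`, which have the mean value
property. -/
def reproducingKernel (w : V) (r : ℝ) (y : V) : ℝ :=
  (∫ y : V, radialProfile r (‖y‖ ^ 2))⁻¹ * radialProfile r (‖y‖ ^ 2) * Real.exp (-⟪y, w⟫_ℝ)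

lemma reproducingKernel_eq_zero (hr : 0 < r) (w : V) {y : V} (hy : r ≤ ‖y‖) :
    reproducingKernel w r y = 0 := by
  simp [reproducingKernel, radialProfile_sq_eq_zero hr hy]

lemma hasCompactSupport_reproducingKernel (hr : 0 < r) (w : V) :
    HasCompactSupport (reproducingKernel w r) :=
  HasCompactSupport.intro (isCompact_closedBall 0 r) fun _ hy ↦
    reproducingKernel_eq_zero hr w (not_le.1 (mt mem_closedBall_zero_iff.2 hy)).le

lemma contDiff_reproducingKernel (w : V) (r : ℝ) : ContDiff ℝ 1 (reproducingKernel w r) :=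
  (contDiff_const.mul (contDiff_comp_norm_sq (contDiff_radialProfile r))).mul
    (contDiff_id.inner ℝ contDiff_const).neg.exp

lemma integral_reproducingKernel_smul [CompleteSpace E] (hστ : IsCliffordPair σ τ) (hr : 0 < r)
    {R : ℝ} (hrR : r < R) {w z : V} {f : V → E} (hf : IsDiracNull σ b w (ball z R) f) :
    ∫ y, reproducingKernel w r y • f (z - y) = f z := by
  let c := ∫ y : V, radialProfile r (‖y‖ ^ 2)
  have hc : c ≠ 0 := (integral_radialProfile_norm_sq_pos hr).ne'
  let h (x : V) : E := Real.exp ⟪x, w⟫_ℝ • f x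
  have hh : ContDiffOn ℝ 1 h (ball z R) :=
    (contDiff_id.inner ℝ contDiff_const).exp.contDiffOn.smul hf.1
  have hhD (x : V) (hx : x ∈ ball z R) : diracOp σ b h x = 0 := by
    rw [diracOp_exp_inner_smul ((hf.1.differentiableOn one_ne_zero).differentiableAt
      (isOpen_ball.mem_nhds hx)), hf.2 x hx, smul_zero]
  have hmean : ∫ y, radialProfile r (‖y‖ ^ 2) • h (z - y) = c • h z := by
    rw [← integral_radial_smul_eq_of_diracOp_eq_zero hστ (contDiff_radialProfile r)
      (fun _ ↦ radialProfile_sq_eq_zero hr) hr hrR hh hhD, ← integral_neg_eq_self]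
    simp
  have hkernel (y : V) : reproducingKernel w r y • f (z - y) =
      (c⁻¹ * Real.exp (-⟪z, w⟫_ℝ)) • radialProfile r (‖y‖ ^ 2) • h (z - y) := by
    have hexp : Real.exp (-⟪y, w⟫_ℝ) = Real.exp (-⟪z, w⟫_ℝ) * Real.exp ⟪z - y, w⟫_ℝ := by
      rw [← Real.exp_add, inner_sub_left]
      ring_nf
    simp only [reproducingKernel, h, c, smul_smul, hexp]
    ring_nf
  simp only [hkernel]
  rw [integral_smul, hmean, mul_smul, smul_comm _ c, inv_smul_smul₀ hc, smul_smul, ← Real.exp_add,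
    neg_add_cancel, Real.exp_zero, one_smul]

lemma IsDiracNull.reproducingKernel_convolution_indicator [CompleteSpace E]
    (hστ : IsCliffordPair σ τ) (hr : 0 < r) {R : ℝ} (hrR : r < R) {w z : V} {f : V → E}
    (hf : IsDiracNull σ b w (ball z R) f) {s : Set V} (hs : ball z r ⊆ s) :
    (reproducingKernel w r ⋆[.lsmul ℝ ℝ] s.indicator f) z = f z := by
  rw [← integral_reproducingKernel_smul hστ hr hrR hf, convolution_def]
  refine integral_congr_ae (Eventually.of_forall fun y ↦ ?_)
  rcases lt_or_ge ‖y‖ r with hy | hy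
  · simp [indicator_of_mem (hs (by simpa using hy : z - y ∈ ball z r))]
  · simp [reproducingKernel_eq_zero hr w hy]

end ReproducingKernel

section Limits

variable {α : Type*} {l : Filter α} {w : V} {Ω : Set V} {u : α → V → E}

lemma IsDiracNull.mono {f : V → E} {Ω' : Set V} (hf : IsDiracNull σ b w Ω f) (h : Ω' ⊆ Ω) :
    IsDiracNull σ b w Ω' f :=
  ⟨hf.1.mono h, fun z hz ↦ hf.2 z (h hz)⟩

lemma IsDiracNull.of_forall_eventuallyEq {f : V → E}
    (h : ∀ z ∈ Ω, ∃ g : V → E, f =ᶠ[𝓝 z] g ∧ ∃ U ∈ 𝓝 z, IsDiracNull σ b w U g) :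
    IsDiracNull σ b w Ω f := by
  refine ⟨fun z hz ↦ ?_, fun z hz ↦ ?_⟩ <;> obtain ⟨g, hfg, U, hU, hg⟩ := h z hz
  · exact ((hg.1.contDiffAt hU).congr_of_eventuallyEq hfg).contDiffWithinAt
  · rw [diracOp_congr hfg, hfg.eq_of_nhds]
    exact hg.2 z (mem_of_mem_nhds hU)

lemma exists_isDiracNull_tendsto_of_local [l.NeBot]
    (h : ∀ z ∈ Ω, ∃ ε > 0, ∃ g : V → E, IsDiracNull σ b w (ball z ε) g ∧
      ∀ x ∈ ball z ε, Tendsto (u · x) l (𝓝 (g x))) :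
    ∃ f : V → E, IsDiracNull σ b w Ω f ∧ ∀ x ∈ Ω, Tendsto (u · x) l (𝓝 (f x)) := by
  refine ⟨fun x ↦ limUnder l (u · x), IsDiracNull.of_forall_eventuallyEq fun z hz ↦ ?_,
    fun x hx ↦ ?_⟩
  · obtain ⟨ε, hε, g, hg, hlim⟩ := h z hz
    refine ⟨g, ?_, ball z ε, ball_mem_nhds z hε, hg⟩
    filter_upwards [ball_mem_nhds z hε] with x hx
    exact (hlim x hx).limUnder_eq
  · obtain ⟨ε, hε, g, -, hlim⟩ := h x hx
    exact tendsto_nhds_limUnder ⟨g x, hlim x (mem_ball_self hε)⟩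

lemma tendsto_diracOp {f : V → E} {x : V}
    (h : Tendsto (fun n ↦ fderiv ℝ (u n) x) l (𝓝 (fderiv ℝ f x))) :
    Tendsto (fun n ↦ diracOp σ b (u n) x) l (𝓝 (diracOp σ b f x)) :=
  tendsto_finsetSum _ fun i _ ↦
    ((σ (b i) ∘L ContinuousLinearMap.apply ℝ E (b i)).continuous.tendsto _).comp h

variable [FiniteDimensional ℝ V] [MeasurableSpace V] [BorelSpace V] [CompleteSpace E]

lemma IsDiracNull.reproducingKernel_convolution_ball (hστ : IsCliffordPair σ τ) {z : V} {R : ℝ}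
    {f : V → E} (hf : IsDiracNull σ b w (ball z R) f) :
    EqOn (reproducingKernel w (R / 4) ⋆[.lsmul ℝ ℝ] (ball z R).indicator f) f (ball z (R / 2)) := by
  intro x hx
  have hR : 0 < R / 2 := pos_of_mem_ball hx
  have hball : ball x (R / 2) ⊆ ball z R := ball_subset_ball' (by linarith [mem_ball.1 hx])
  exact (hf.mono hball).reproducingKernel_convolution_indicator hστ (by linarith) (by linarith)
    ((ball_subset_ball (by linarith)).trans hball)

lemma exists_isDiracNull_tendsto_of_eLpNorm_one_ball [l.NeBot] (hστ : IsCliffordPair σ τ) {z : V}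
    {R : ℝ} (hR : 0 < R) {H : V → E}
    (hu : ∀ n, IsDiracNull σ b w (ball z R) (u n)) (hui : ∀ n, IntegrableOn (u n) (ball z R))
    (hH : IntegrableOn H (ball z R))
    (hlim : Tendsto (fun n ↦ eLpNorm (u n - H) 1 (volume.restrict (ball z R))) l (𝓝 0)) :
    ∃ g : V → E, IsDiracNull σ b w (ball z (R / 2)) g ∧
      ∀ x ∈ ball z (R / 2), Tendsto (u · x) l (𝓝 (g x)) := by
  let k := reproducingKernel w (R / 4)
  have hk : ContDiff ℝ 1 k := contDiff_reproducingKernel w _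
  have hkc : HasCompactSupport k := hasCompactSupport_reproducingKernel (by linarith) w
  have hint (f : V → E) (hf : IntegrableOn f (ball z R)) : Integrable ((ball z R).indicator f) :=
    (integrable_indicator_iff measurableSet_ball).2 hf
  have hlim' : Tendsto (fun n ↦ eLpNorm ((ball z R).indicator (u n) - (ball z R).indicator H) 1
      volume) l (𝓝 0) := by
    simpa only [← indicator_sub', eLpNorm_indicator_eq_eLpNorm_restrict measurableSet_ball]
      using hlim
  have hrepr (n : α) := (hu n).reproducingKernel_convolution_ball hστ
  have hpt (x : V) (hx : x ∈ ball z (R / 2)) :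
      Tendsto (u · x) l (𝓝 ((k ⋆[.lsmul ℝ ℝ] (ball z R).indicator H) x)) :=
    (tendsto_convolution_of_eLpNorm_one (.lsmul ℝ ℝ) hk.continuous hkc (fun n ↦ hint _ (hui n))
      (hint _ hH) hlim' x).congr fun n ↦ hrepr n hx
  refine ⟨_, ⟨(hkc.contDiff_convolution_left _ hk (hint _ hH).locallyIntegrable).contDiffOn,
    fun x hx ↦ ?_⟩, hpt⟩
  have hderiv := tendsto_fderiv_convolution_of_eLpNorm_one (.lsmul ℝ ℝ) hk hkc
    (fun n ↦ hint _ (hui n)) (hint _ hH) hlim' x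
  refine tendsto_nhds_unique
    ((tendsto_diracOp hderiv).add (((σ w).continuous.tendsto _).comp (hpt x hx)))
    (tendsto_const_nhds.congr fun n ↦ ?_)
  have hloc := (hrepr n).eventuallyEq_of_mem (isOpen_ball.mem_nhds hx)
  rw [Function.comp_apply, diracOp_congr hloc, (hu n).2 x (ball_subset_ball (by linarith) hx)]

end Limits

section Bergman

variable {α : Type*} {l : Filter α} [l.NeBot] {w : V} {Ω : Set V} {p : ENNReal}
  [FiniteDimensional ℝ V] [MeasurableSpace V] [BorelSpace V] [CompleteSpace E]

lemma exists_isDiracNull_ae_eq_of_tendsto_eLpNorm [l.IsCountablyGenerated]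
    (hστ : IsCliffordPair σ τ) (hΩ : IsOpen Ω) (hp : 1 ≤ p) {u : α → V → E} {H : V → E}
    (hu : ∀ n, IsDiracNull σ b w Ω (u n)) (hup : ∀ n, MemLp (u n) p (volume.restrict Ω))
    (hH : MemLp H p (volume.restrict Ω))
    (hlim : Tendsto (fun n ↦ eLpNorm (u n - H) p (volume.restrict Ω)) l (𝓝 0)) :
    ∃ f : V → E, IsDiracNull σ b w Ω f ∧ H =ᵐ[volume.restrict Ω] f := by
  obtain ⟨f, hf, huf⟩ : ∃ f, IsDiracNull σ b w Ω f ∧ ∀ x ∈ Ω, Tendsto (u · x) l (𝓝 (f x)) := by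
    refine exists_isDiracNull_tendsto_of_local fun z hz ↦ ?_
    obtain ⟨R, hR, hball⟩ := Metric.isOpen_iff.1 hΩ z hz
    have : IsFiniteMeasure (volume.restrict (ball z R)) := ⟨by simp [measure_ball_lt_top]⟩
    have hle : volume.restrict (ball z R) ≤ volume.restrict Ω := Measure.restrict_mono_set _ hball
    have hlim' := tendsto_of_tendsto_of_tendsto_of_le_of_le tendsto_const_nhds hlim
      (fun _ ↦ zero_le) fun n ↦ eLpNorm_mono_measure (u n - H) hle
    exact ⟨R / 2, half_pos hR, exists_isDiracNull_tendsto_of_eLpNorm_one_ball hστ hR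
      (fun n ↦ (hu n).mono hball) (fun n ↦ ((hup n).mono_measure hle).integrable hp)
      ((hH.mono_measure hle).integrable hp)
      (tendsto_eLpNorm_one_of_tendsto_eLpNorm hp
        (fun n ↦ (((hup n).sub hH).mono_measure hle).aestronglyMeasurable) hlim')⟩
  obtain ⟨ns, hns, hae⟩ := (tendstoInMeasure_of_tendsto_eLpNorm (zero_lt_one.trans_le hp).ne'
    (fun n ↦ (hup n).aestronglyMeasurable) hH.aestronglyMeasurable hlim).exists_seq_tendsto_ae'
  refine ⟨f, hf, ?_⟩
  filter_upwards [hae, ae_restrict_mem hΩ.measurableSet] with x hx hxΩ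
  exact tendsto_nhds_unique hx ((huf x hxΩ).comp hns)

theorem exists_isDiracNull_tendsto_of_cauchy_eLpNorm [Fact (1 ≤ p)] (hστ : IsCliffordPair σ τ)
    (hΩ : IsOpen Ω) {u : ℕ → V → E} (hu : ∀ n, IsDiracNull σ b w Ω (u n))
    (hup : ∀ n, MemLp (u n) p (volume.restrict Ω))
    (hcauchy : Tendsto (fun n : ℕ × ℕ ↦ eLpNorm (u n.1 - u n.2) p (volume.restrict Ω)) atTop
      (𝓝 0)) :
    ∃ f : V → E, IsDiracNull σ b w Ω f ∧ MemLp f p (volume.restrict Ω) ∧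
      Tendsto (fun n ↦ eLpNorm (u n - f) p (volume.restrict Ω)) atTop (𝓝 0) := by
  obtain ⟨H, hH, hlim⟩ := exists_memLp_tendsto_of_cauchy hup hcauchy
  obtain ⟨f, hf, hHf⟩ := exists_isDiracNull_ae_eq_of_tendsto_eLpNorm hστ hΩ Fact.out hu hup hH hlim
  refine ⟨f, hf, (memLp_congr_ae hHf).1 hH, hlim.congr fun n ↦ eLpNorm_congr_ae ?_⟩
  exact EventuallyEq.rfl.sub hHf

end Bergman

end Dirac

section Quaternion

lemma e2_eq (θ : ℝ) : e2 θ = ⟨0, 0, -Real.sin θ, Real.cos θ⟩ := by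
  ext <;> simp [e2] <;> simp [qI, eIθ, qJ]

lemma e3_eq (θ : ℝ) : e3 θ = ⟨0, 0, Real.cos θ, Real.sin θ⟩ := by
  ext <;> simp [e3] <;> simp [eIθ, qJ]

lemma inner_eq_sum_coord_mul (a c : H4) :
    ⟪a, c⟫_ℝ = a.re * c.re + a.imI * c.imI + a.imJ * c.imJ + a.imK * c.imK := by
  simp [Quaternion.inner_def]

lemma orthonormal_thetaFrame (θ : ℝ) : Orthonormal ℝ ![1, qI, e2 θ, e3 θ] := by
  rw [orthonormal_iff_ite]
  intro i j
  rw [inner_eq_sum_coord_mul, e2_eq, e3_eq]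
  fin_cases i <;> fin_cases j <;>
    simp [qI, Quaternion.re_one, Quaternion.imI_one, Quaternion.imJ_one, Quaternion.imK_one,
      ← sq, mul_comm]

/-- The orthonormal basis `1, i, i e^{iθ} j, e^{iθ} j` of `ℍ` defining the θ-coordinates. -/
def thetaBasis (θ : ℝ) : OrthonormalBasis (Fin 4) ℝ H4 :=
  (basisOfOrthonormalOfCardEqFinrank (orthonormal_thetaFrame θ)
    (by simp [Quaternion.finrank_eq_four])).toOrthonormalBasis (by
      simpa using orthonormal_thetaFrame θ)

lemma coe_thetaBasis (θ : ℝ) : ⇑(thetaBasis θ) = ![1, qI, e2 θ, e3 θ] := by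
  simp [thetaBasis]

/-- Left multiplication of quaternions by the conjugate of the first argument. -/
def starMul : H4 →L[ℝ] H4 →L[ℝ] H4 :=
  (ContinuousLinearMap.mul ℝ H4).comp <| LinearMap.toContinuousLinearMap
    { toFun := star
      map_add' := star_add
      map_smul' := fun c a ↦ Quaternion.star_smul c a }

lemma isCliffordPair_mul_starMul : IsCliffordPair (ContinuousLinearMap.mul ℝ H4) starMul := by
  intro v x
  change star v * (v * x) = ‖v‖ ^ 2 • x
  rw [← mul_assoc, Quaternion.star_mul_self, Quaternion.coe_mul_eq_smul,
    Quaternion.normSq_eq_norm_mul_self, sq]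

lemma Dlu_eq_diracOp_add (θ : ℝ) (u : H4) (f : H4 → H4) (z : H4) :
    Dlu θ u f z = diracOp (.mul ℝ H4) (thetaBasis θ) f z + u * f z := by
  simp [Dlu, Dl, diracOp, coe_thetaBasis, Fin.sum_univ_four]

lemma memA_iff {θ : ℝ} {u : H4} {Ω : Set H4} (hΩ : IsOpen Ω) {f : H4 → H4} :
    memA θ u Ω f ↔ IsDiracNull (.mul ℝ H4) (thetaBasis θ) u Ω f ∧
      MemLp f 2 (volume.restrict Ω) := by
  simp only [memA, IsDiracNull, Dlu_eq_diracOp_add, ContinuousLinearMap.mul_apply', and_assoc]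
  refine and_congr_right fun hf ↦ and_congr_right fun _ ↦ ?_
  exact (memLp_two_iff_integrable_sq_norm
    (hf.continuousOn.aestronglyMeasurable hΩ.measurableSet)).symm

end Quaternion

theorem statement7_general {Ω : Set H4} (hΩ : IsOpen Ω) (θ : ℝ) (u : H4) {F : ℕ → H4 → H4}
    (hF : ∀ n, memA θ u Ω (F n))
    (hcauchy : ∀ ε > (0 : ℝ), ∃ N : ℕ, ∀ m ≥ N, ∀ n ≥ N,
      √(∫ ζ in Ω, ‖F m ζ - F n ζ‖ ^ 2) < ε) :
    ∃ f : H4 → H4, memA θ u Ω f ∧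
      Tendsto (fun n ↦ ∫ ζ in Ω, ‖F n ζ - f ζ‖ ^ 2) atTop (𝓝 0) := by
  simp only [memA_iff hΩ] at hF ⊢
  have hcauchy' : Tendsto (fun n : ℕ × ℕ ↦ eLpNorm (F n.1 - F n.2) 2 (volume.restrict Ω)) atTop
      (𝓝 0) := by
    refine (tendsto_eLpNorm_two_iff_tendsto_integral_sq (f := fun n : ℕ × ℕ ↦ F n.1 - F n.2)
      fun n ↦ (hF n.1).2.sub (hF n.2).2).2 (Metric.tendsto_nhds.2 fun ε hε ↦ ?_)
    obtain ⟨N, hN⟩ := hcauchy ε hε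
    filter_upwards [eventually_ge_atTop (N, N)] with n hn
    simpa [abs_of_nonneg (Real.sqrt_nonneg _)] using hN n.1 hn.1 n.2 hn.2
  obtain ⟨f, hf, hfp, hlim⟩ := exists_isDiracNull_tendsto_of_cauchy_eLpNorm
    isCliffordPair_mul_starMul hΩ (fun n ↦ (hF n).1) (fun n ↦ (hF n).2) hcauchy'
  have hlim' := (tendsto_eLpNorm_two_iff_tendsto_integral_sq (f := fun n ↦ F n - f)
    fun n ↦ (hF n).2.sub hfp).1 hlim
  refine ⟨f, ⟨hf, hfp⟩, ?_⟩
  simpa using (hlim'.pow 2).congr fun n ↦ Real.sq_sqrt (integral_nonneg fun _ ↦ sq_nonneg _)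

/-- the Bergman space `{}^θ_u𝒜(Ω)` is complete in the L² norm. -/
theorem statement7 (Ω : Set H4) (hΩo : IsOpen Ω) (hΩc : IsConnected Ω)
    (hΩb : Bornology.IsBounded Ω) (θ : ℝ) (hθ : θ ∈ Set.Ico 0 (2 * Real.pi)) (u : H4)
    (F : ℕ → H4 → H4) (hF : ∀ n, memA θ u Ω (F n))
    (hcauchy : ∀ ε > (0 : ℝ), ∃ N : ℕ, ∀ m ≥ N, ∀ n ≥ N,
        Real.sqrt (∫ ζ in Ω, ‖F m ζ - F n ζ‖ ^ 2) < ε) :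
    ∃ f : H4 → H4, memA θ u Ω f ∧
      Filter.Tendsto (fun n => ∫ ζ in Ω, ‖F n ζ - f ζ‖ ^ 2) Filter.atTop (nhds 0) :=
  statement7_general hΩo θ u hF hcauchy

end
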